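/- Let u be a subharmonic function on a domain in ℝ⁴ containing the closed unit ball, with u ≤ 0 there and u(0) > −∞, and let 1 ≤ p < 2. Then u ∈ L^p of the ball of radius 1/2 and ‖u‖_{L^p(B(0,1/2))} ≤ C_p |u(0)| for a constant C_p depending only on p. -/

import Mathlib

open Metric MeasureTheory

noncomputable section

abbrev E4 := EuclideanSpace ℝ (Fin 4)

/-- `u` is subharmonic on the open set `s ⊆ ℝ⁴`: it is upper semicontinuous and satisfies
the sub-mean value property over balls contained in `s`. -/
def SubharmonicOn (u : E4 → ℝ) (s : Set E4) : Prop :=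
  UpperSemicontinuousOn u s ∧ LocallyIntegrableOn u s ∧
    ∀ x ∈ s, ∀ r > (0 : ℝ), closedBall x r ⊆ s →
      u x ≤ ((volume (ball x r)).toReal)⁻¹ * ∫ y in ball x r, u y

/-!
Let `d` be the dimension and `d - 2 < a < d`. The Riesz kernel `|x - y| ^ (-a)` is strictly
subharmonic in `x` away from `y`, and it stays so after subtracting an affine function of `x` that
makes it nonpositive on the unit sphere. Suppose `u < -t` on a compact set `K ⊆ B(0, 1/2)`, and let
`V` be the potential of Lebesgue measure on `K`. If `c * V ≤ t`, then `u + c * V` is nonpositive on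
`K` and on the unit sphere and has no positive maximum elsewhere, so it is nonpositive on the unit
ball. At the origin this reads `c * |K| ≲ |u 0|`. Optimizing over the radius that splits the
potential into a near and a far part gives `|K| ≲ (|u 0| / t) ^ (d / a)`. This weak type bound
implies the `L ^ p` bound for all `p < d / a`, and `d / a` is arbitrarily close to `d / (d - 2)`.
-/

section WeakType

variable {α : Type*} [MeasurableSpace α] {μ : Measure α}

theorem lintegral_Ioc_meas_mul_rpow_le [IsFiniteMeasure μ] {f : α → ℝ} {p A : ℝ} (hp : 0 < p)
    (hA : 0 ≤ A) :
    ∫⁻ t in Set.Ioc 0 A, μ {x | t < f x} * ENNReal.ofReal (t ^ (p - 1)) ≤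
      ENNReal.ofReal (μ.real Set.univ * (A ^ p / p)) := by
  have hint : IntegrableOn (fun t : ℝ => t ^ (p - 1)) (Set.Ioc 0 A) := by
    rw [← intervalIntegrable_iff_integrableOn_Ioc_of_le hA]
    exact intervalIntegral.intervalIntegrable_rpow' (by linarith)
  have hval : ∫ t in Set.Ioc 0 A, t ^ (p - 1) = A ^ p / p := by
    rw [← intervalIntegral.integral_of_le hA, integral_rpow (Or.inl (by linarith))]
    simp [Real.zero_rpow hp.ne']
  have hnonneg : 0 ≤ᵐ[volume.restrict (Set.Ioc 0 A)] fun t => μ.real Set.univ * t ^ (p - 1) := by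
    filter_upwards [ae_restrict_mem measurableSet_Ioc] with t ht
    exact mul_nonneg measureReal_nonneg (Real.rpow_nonneg ht.1.le _)
  rw [← hval, ← integral_const_mul, ofReal_integral_eq_lintegral_ofReal (hint.const_mul _) hnonneg]
  gcongr with t
  rw [ENNReal.ofReal_mul measureReal_nonneg, ofReal_measureReal]
  gcongr
  exact Set.subset_univ _

theorem lintegral_Ioi_meas_mul_rpow_le {f : α → ℝ} {p q A C : ℝ} (hpq : p < q) (hC : 0 ≤ C)
    (hA : 0 < A)
    (hweak : ∀ t > 0, μ {x | t < f x} ≤ ENNReal.ofReal (C * (A / t) ^ q)) :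
    ∫⁻ t in Set.Ioi A, μ {x | t < f x} * ENNReal.ofReal (t ^ (p - 1)) ≤
      ENNReal.ofReal (C * (A ^ p / (q - p))) := by
  have hint : IntegrableOn (fun t : ℝ => t ^ (p - 1 - q)) (Set.Ioi A) :=
    integrableOn_Ioi_rpow_of_lt (by linarith) hA
  have hval : C * (A ^ p / (q - p)) = ∫ t in Set.Ioi A, C * A ^ q * t ^ (p - 1 - q) := by
    rw [integral_const_mul, integral_Ioi_rpow_of_lt (by linarith) hA,
      show p - 1 - q + 1 = -(q - p) by ring, neg_div_neg_eq, mul_assoc, ← mul_div_assoc (A ^ q),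
      ← Real.rpow_add hA, show q + -(q - p) = p by ring]
  have hnonneg : 0 ≤ᵐ[volume.restrict (Set.Ioi A)] fun t => C * A ^ q * t ^ (p - 1 - q) := by
    filter_upwards [ae_restrict_mem measurableSet_Ioi] with t ht
    have : 0 < t := hA.trans ht
    positivity
  rw [hval, ofReal_integral_eq_lintegral_ofReal (hint.const_mul _) hnonneg]
  refine setLIntegral_mono' measurableSet_Ioi fun t ht => ?_
  have ht : 0 < t := hA.trans ht
  calc μ {x | t < f x} * ENNReal.ofReal (t ^ (p - 1))
      ≤ ENNReal.ofReal (C * (A / t) ^ q) * ENNReal.ofReal (t ^ (p - 1)) := by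
        gcongr; exact hweak t ht
    _ = ENNReal.ofReal (C * A ^ q * t ^ (p - 1 - q)) := by
        rw [← ENNReal.ofReal_mul (by positivity), Real.div_rpow hA.le ht.le,
          Real.rpow_sub ht (p - 1)]
        congr 1
        ring

theorem lintegral_rpow_le_of_weak_type [IsFiniteMeasure μ] {f : α → ℝ} (hf : AEMeasurable f μ)
    (hf0 : 0 ≤ᵐ[μ] f) {p q A C : ℝ} (hp : 0 < p) (hpq : p < q) (hC : 0 ≤ C) (hA : 0 ≤ A)
    (hweak : ∀ t > 0, μ {x | t < f x} ≤ ENNReal.ofReal (C * (A / t) ^ q)) :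
    ∫⁻ x, ENNReal.ofReal (f x ^ p) ∂μ ≤
      ENNReal.ofReal ((μ.real Set.univ + p * C / (q - p)) * A ^ p) := by
  have hqp : 0 < q - p := sub_pos.2 hpq
  rw [lintegral_rpow_eq_lintegral_meas_lt_mul μ hf0 hf hp]
  rcases hA.eq_or_lt with rfl | hA
  · have hzero : ∀ t ∈ Set.Ioi (0 : ℝ),
        μ {x | t < f x} * ENNReal.ofReal (t ^ (p - 1)) = 0 := fun t ht => by
      have := hweak t ht
      rw [zero_div, Real.zero_rpow (hp.trans hpq).ne', mul_zero, ENNReal.ofReal_zero,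
        nonpos_iff_eq_zero] at this
      rw [this, zero_mul]
    rw [setLIntegral_congr_fun measurableSet_Ioi hzero]
    simp
  calc ENNReal.ofReal p * ∫⁻ t in Set.Ioi 0, μ {x | t < f x} * ENNReal.ofReal (t ^ (p - 1))
      ≤ ENNReal.ofReal p * (ENNReal.ofReal (μ.real Set.univ * (A ^ p / p)) +
          ENNReal.ofReal (C * (A ^ p / (q - p)))) := by
        gcongr
        rw [← Set.Ioc_union_Ioi_eq_Ioi hA.le]
        exact (lintegral_union_le _ _ _).trans (add_le_add
          (lintegral_Ioc_meas_mul_rpow_le hp hA.le)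
          (lintegral_Ioi_meas_mul_rpow_le hpq hC hA hweak))
    _ = ENNReal.ofReal ((μ.real Set.univ + p * C / (q - p)) * A ^ p) := by
        rw [← ENNReal.ofReal_add (by positivity) (by positivity), ← ENNReal.ofReal_mul hp.le]
        congr 1
        field_simp

end WeakType

section RealInequalities

open scoped Topology

theorem eventually_le_one_add_rpow_neg {q m : ℝ} (hm : m < q * (q + 1) / 2) :
    ∀ᶠ x in 𝓝 (0 : ℝ), 1 - q * x + m * x ^ 2 ≤ (1 + x) ^ (-q) := by
  set g : ℝ → ℝ := fun x => (1 + x) ^ (-q) - (1 - q * x + m * x ^ 2)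
  have hpow : ∀ e x : ℝ, 1 + x ≠ 0 →
      HasDerivAt (fun x => (1 + x) ^ e) (e * (1 + x) ^ (e - 1)) x := fun e x hx => by
    simpa using ((hasDerivAt_id x).const_add 1).rpow_const (p := e) (Or.inl hx)
  have hlin : ∀ c x : ℝ, HasDerivAt (fun x => c * x) c x := fun c x => by
    simpa using (hasDerivAt_id x).const_mul c
  have hg : ∀ x, 1 + x ≠ 0 →
      HasDerivAt g (-q * (1 + x) ^ (-q - 1) - (-q + 2 * m * x)) x := fun x hx => by
    refine ((hpow (-q) x hx).fun_sub (((hlin q x).const_sub 1).fun_add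
      ((hasDerivAt_pow 2 x).const_mul m))).congr_deriv ?_
    simp only [Nat.cast_ofNat, Nat.add_one_sub_one, pow_one]
    ring
  have hg_zero : HasDerivAt g 0 0 := by simpa using hg 0 (by norm_num)
  have hderiv : deriv g =ᶠ[𝓝 0] fun x => -q * (1 + x) ^ (-q - 1) - (-q + 2 * m * x) := by
    have : ∀ᶠ x : ℝ in 𝓝 0, 1 + x ≠ 0 :=
      (continuous_const.add continuous_id).continuousAt.eventually_ne (by norm_num)
    filter_upwards [this] with x hx using (hg x hx).deriv
  have hderiv2 : deriv (deriv g) 0 = q * (q + 1) - 2 * m := by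
    rw [hderiv.deriv_eq, (((hpow (-q - 1) 0 (by norm_num)).const_mul (-q)).fun_sub
      ((hlin (2 * m) 0).const_add (-q))).deriv, add_zero, Real.one_rpow]
    ring
  filter_upwards [isLocalMin_of_deriv_deriv_pos (by rw [hderiv2]; linarith) hg_zero.deriv
    hg_zero.continuousAt] with x hx
  simpa [g] using hx

theorem convexOn_rpow_neg {a : ℝ} (ha : 0 ≤ a) :
    ConvexOn ℝ (Set.Ioi 0) fun x : ℝ => x ^ (-a) := by
  have hderiv : ∀ e : ℝ, ∀ x ∈ Set.Ioi (0 : ℝ),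
      HasDerivWithinAt (fun x => x ^ e) (e * x ^ (e - 1)) (Set.Ioi 0) x := fun e x hx =>
    (Real.hasDerivAt_rpow_const (Or.inl (Set.mem_Ioi.1 hx).ne')).hasDerivWithinAt
  refine convexOn_of_hasDerivWithinAt2_nonneg (convex_Ioi 0)
    (fun x hx => (hderiv (-a) x hx).continuousWithinAt) (f' := fun x => -a * x ^ (-a - 1))
    (f'' := fun x => -a * ((-a - 1) * x ^ (-a - 1 - 1))) ?_ ?_ ?_ <;> rw [interior_Ioi]
  · exact hderiv (-a)
  · exact fun x hx => (hderiv (-a - 1) x hx).const_mul (-a)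
  · intro x hx
    have := Real.rpow_nonneg (Set.mem_Ioi.1 hx).le (-a - 1 - 1)
    rw [show -a * ((-a - 1) * x ^ (-a - 1 - 1)) = a * (a + 1) * x ^ (-a - 1 - 1) by ring]
    positivity

theorem three_halves_rpow_neg_lt {a : ℝ} (ha : 0 < a) :
    (3 / 2 : ℝ) ^ (-a) < (1 / 2) ^ (-a) :=
  Real.rpow_lt_rpow_of_neg (by norm_num) (by norm_num) (neg_neg_of_pos ha)

theorem one_sub_rpow_neg_le_chord {a s : ℝ} (ha : 0 ≤ a) (hs : |s| ≤ 1 / 2) :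
    (1 - s) ^ (-a) ≤ ((1 / 2) ^ (-a) + (3 / 2) ^ (-a)) / 2 +
      ((1 / 2) ^ (-a) - (3 / 2) ^ (-a)) * s := by
  obtain ⟨hs₁, hs₂⟩ := abs_le.1 hs
  have h := (convexOn_rpow_neg ha).2 (show (1 / 2 : ℝ) ∈ Set.Ioi 0 by norm_num)
    (show (3 / 2 : ℝ) ∈ Set.Ioi 0 by norm_num) (show 0 ≤ 1 / 2 + s by linarith)
    (show 0 ≤ 1 / 2 - s by linarith) (by ring)
  simp only [smul_eq_mul] at h
  rw [show (1 / 2 + s) * (1 / 2) + (1 / 2 - s) * (3 / 2) = 1 - s by ring] at h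
  linarith

theorem le_mul_rpow_of_forall_mul_le {a d g I B m : ℝ} (ha : 0 < a) (hg : 0 < g) (hI : 0 ≤ I)
    (hB : 0 ≤ B) (h : ∀ R > 0, g * m ≤ (I * R ^ (d - a) + R ^ (-a) * m) * B) :
    m ≤ I * (2 * B / g) ^ (d / a) := by
  rcases hB.eq_or_lt with rfl | hB
  · have hm : m ≤ 0 := nonpos_of_mul_nonpos_right ((h 1 one_pos).trans_eq (mul_zero _)) hg
    exact hm.trans (by positivity)
  have hQ : 0 < 2 * B / g := by positivity
  set R := (2 * B / g) ^ (1 / a)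
  have hR : 0 < R := by positivity
  have hRa : R ^ (-a) * B = g / 2 := by
    rw [← Real.rpow_mul hQ.le, one_div_mul_eq_div, neg_div_self ha.ne', Real.rpow_neg_one]
    field_simp
  have hRd : R ^ d = (2 * B / g) ^ (d / a) := by
    rw [← Real.rpow_mul hQ.le, one_div_mul_eq_div]
  have hopt := h R hR
  rw [show (I * R ^ (d - a) + R ^ (-a) * m) * B = (I * R ^ d + m) * (R ^ (-a) * B) by
    rw [sub_eq_add_neg, Real.rpow_add hR]; ring, hRa] at hopt
  rw [← hRd]
  nlinarith

end RealInequalities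

section Subharmonic

variable {E : Type*} [NormedAddCommGroup E] [InnerProductSpace ℝ E] [FiniteDimensional ℝ E]
  [MeasurableSpace E] [BorelSpace E]

/-- Subharmonicity of a finite-valued function on a subset of a Euclidean space, with the
sub-mean value property over solid balls. The set need not be open: only the closed balls
contained in it are tested. -/
structure IsSubharmonicOn (u : E → ℝ) (s : Set E) : Prop where
  upperSemicontinuousOn : UpperSemicontinuousOn u s
  locallyIntegrableOn : LocallyIntegrableOn u s
  le_setAverage : ∀ ⦃x : E⦄ ⦃r : ℝ⦄, 0 < r → closedBall x r ⊆ s → u x ≤ ⨍ y in ball x r, u y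

namespace IsSubharmonicOn

variable {u : E → ℝ} {s : Set E}

theorem integrableOn_ball (hu : IsSubharmonicOn u s) {x : E} {r : ℝ} (hr : closedBall x r ⊆ s) :
    IntegrableOn u (ball x r) :=
  (hu.locallyIntegrableOn.integrableOn_compact_subset hr (isCompact_closedBall x r)).mono_set
    ball_subset_closedBall

theorem exists_lt_add (hu : IsSubharmonicOn u s) {W : E → ℝ} {x : E} {r : ℝ} (hr : 0 < r)
    (hxr : closedBall x r ⊆ s) (hW : IntegrableOn W (ball x r))
    (hWx : W x < ⨍ y in ball x r, W y) : ∃ y ∈ ball x r, u x + W x < u y + W y := by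
  have hu_int := hu.integrableOn_ball hxr
  obtain ⟨y, hy, hle⟩ := exists_setAverage_le (measure_ball_pos volume x hr).ne'
    measure_ball_lt_top.ne (hu_int.add hW)
  refine ⟨y, hy, ?_⟩
  calc u x + W x < (⨍ y in ball x r, u y) + ⨍ y in ball x r, W y :=
        add_lt_add_of_le_of_lt (hu.le_setAverage hr hxr) hWx
    _ = ⨍ y in ball x r, (u + W) y := by
        simp only [setAverage_eq, Pi.add_apply, integral_add hu_int hW, smul_add]
    _ ≤ u y + W y := hle

theorem add_nonpos (hu : IsSubharmonicOn u s) {W : E → ℝ} {A : Set E} (hA : IsCompact A)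
    (hAs : A ⊆ s) (hWA : ContinuousOn W A) (hout : ∀ x ∈ s \ A, u x + W x ≤ 0)
    (hin : ∀ x ∈ A, 0 < u x + W x → ∃ r > 0, closedBall x r ⊆ s ∧
      IntegrableOn W (ball x r) ∧ W x < ⨍ y in ball x r, W y) :
    ∀ x ∈ s, u x + W x ≤ 0 := by
  by_contra! ⟨x₀, hx₀s, hx₀⟩
  have hmem_A : ∀ x ∈ s, 0 < u x + W x → x ∈ A := fun x hxs hx => by
    by_contra hxA
    exact (hout x ⟨hxs, hxA⟩).not_gt hx
  obtain ⟨x, hxA, hmax⟩ := ((hu.upperSemicontinuousOn.mono hAs).add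
    hWA.upperSemicontinuousOn).exists_isMaxOn ⟨x₀, hmem_A x₀ hx₀s hx₀⟩ hA
  have hx : 0 < u x + W x := hx₀.trans_le (hmax (hmem_A x₀ hx₀s hx₀))
  obtain ⟨r, hr, hxr, hW, hWx⟩ := hin x hxA hx
  obtain ⟨y, hy, hxy⟩ := hu.exists_lt_add hr hxr hW hWx
  have hyA := hmem_A y (hxr (ball_subset_closedBall hy)) (hx.trans hxy)
  exact hxy.not_ge (hmax hyA)

end IsSubharmonicOn

end Subharmonic

section BallSymmetrization

open scoped RealInnerProductSpace

variable {E : Type*} [NormedAddCommGroup E] [InnerProductSpace ℝ E] [MeasurableSpace E]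
  [BorelSpace E]

theorem measurableEmbedding_add_isometry (L : E ≃ₗᵢ[ℝ] E) (x : E) :
    MeasurableEmbedding fun h => x + L h :=
  (Homeomorph.addLeft x).measurableEmbedding.comp L.toHomeomorph.measurableEmbedding

variable [FiniteDimensional ℝ E]

theorem volume_real_ball_pos (x : E) {r : ℝ} (hr : 0 < r) : 0 < volume.real (ball x r) :=
  ENNReal.toReal_pos (measure_ball_pos volume x hr).ne' measure_ball_lt_top.ne

theorem integrableOn_ball_of_continuousOn_closedBall {f : E → ℝ} {x : E} {r : ℝ}
    (hf : ContinuousOn f (closedBall x r)) : IntegrableOn f (ball x r) :=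
  (hf.integrableOn_compact (isCompact_closedBall x r)).mono_set ball_subset_closedBall

theorem measurePreserving_add_isometry_restrict_ball (L : E ≃ₗᵢ[ℝ] E) (x : E) (r : ℝ) :
    MeasurePreserving (fun h => x + L h) (volume.restrict (ball 0 r))
      (volume.restrict (ball x r)) := by
  have hpre : (fun h => x + L h) ⁻¹' ball x r = ball 0 r := by
    ext h
    simp
  rw [← hpre]
  exact ((measurePreserving_add_left volume x).comp L.measurePreserving).restrict_preimage
    measurableSet_ball

theorem integral_ball_zero_add_isometry (L : E ≃ₗᵢ[ℝ] E) (f : E → ℝ) (x : E) (r : ℝ) :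
    ∫ h in ball 0 r, f (x + L h) = ∫ y in ball x r, f y :=
  (measurePreserving_add_isometry_restrict_ball L x r).integral_comp
    (measurableEmbedding_add_isometry L x) f

theorem integrableOn_ball_zero_add_isometry_iff (L : E ≃ₗᵢ[ℝ] E) {f : E → ℝ} {x : E} {r : ℝ} :
    IntegrableOn (fun h => f (x + L h)) (ball 0 r) ↔ IntegrableOn f (ball x r) :=
  (measurePreserving_add_isometry_restrict_ball L x r).integrable_comp_emb
    (measurableEmbedding_add_isometry L x)

theorem integrableOn_ball_zero_add_add_sub {f : E → ℝ} {x : E} {r : ℝ}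
    (hf : IntegrableOn f (ball x r)) :
    IntegrableOn (fun h => f (x + h) + f (x - h)) (ball 0 r) := by
  simp only [sub_eq_add_neg]
  exact ((integrableOn_ball_zero_add_isometry_iff (LinearIsometryEquiv.refl ℝ E)).2 hf).add
    ((integrableOn_ball_zero_add_isometry_iff (LinearIsometryEquiv.neg ℝ)).2 hf)

theorem integral_ball_zero_add_add_sub {f : E → ℝ} {x : E} {r : ℝ}
    (hf : IntegrableOn f (ball x r)) :
    ∫ h in ball 0 r, (f (x + h) + f (x - h)) = 2 * ∫ y in ball x r, f y := by
  simp only [sub_eq_add_neg]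
  rw [two_mul]
  nth_rw 1 [← integral_ball_zero_add_isometry (LinearIsometryEquiv.refl ℝ E) f x r]
  rw [← integral_ball_zero_add_isometry (LinearIsometryEquiv.neg ℝ) f x r]
  exact integral_add ((integrableOn_ball_zero_add_isometry_iff (LinearIsometryEquiv.refl ℝ E)).2 hf)
    ((integrableOn_ball_zero_add_isometry_iff (LinearIsometryEquiv.neg ℝ)).2 hf)

theorem setAverage_ball_comp_sub (f : E → ℝ) (x y : E) (r : ℝ) :
    ⨍ w in ball x r, f (w - y) = ⨍ w in ball (x - y) r, f w := by
  have hshift := integral_ball_zero_add_isometry (LinearIsometryEquiv.refl ℝ E)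
  rw [setAverage_eq, setAverage_eq, ← hshift f (x - y), ← hshift (fun w => f (w - y)) x,
    measureReal_def, measureReal_def, Measure.addHaar_ball_center volume x,
    Measure.addHaar_ball_center volume (x - y)]
  simp only [LinearIsometryEquiv.coe_refl, id, add_sub_right_comm]

theorem setAverage_ball_const_add_inner (c : ℝ) (x v : E) {r : ℝ} (hr : 0 < r) :
    ⨍ y in ball x r, (c + ⟪y, v⟫) = c + ⟪x, v⟫ := by
  have hint : IntegrableOn (fun y => c + ⟪y, v⟫) (ball x r) :=
    integrableOn_ball_of_continuousOn_closedBall (by fun_prop)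
  have hpair : ∀ h, c + ⟪x + h, v⟫ + (c + ⟪x - h, v⟫) = 2 * (c + ⟪x, v⟫) := fun h => by
    rw [inner_add_left, inner_sub_left]
    ring
  have hsym := integral_ball_zero_add_add_sub hint
  simp only [hpair, setIntegral_const, smul_eq_mul] at hsym
  rw [measureReal_def, ← Measure.addHaar_ball_center volume x r, ← measureReal_def] at hsym
  rw [setAverage_eq, smul_eq_mul, inv_mul_eq_iff_eq_mul₀ (volume_real_ball_pos x hr).ne']
  linarith

theorem integral_ball_zero_inner_sq_eq {v w : E} (hvw : ‖v‖ = ‖w‖) (r : ℝ) :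
    ∫ h in ball 0 r, ⟪v, h⟫ ^ 2 = ∫ h in ball 0 r, ⟪w, h⟫ ^ 2 := by
  set R := (ℝ ∙ (v - w))ᗮ.reflection
  have hR : ∀ h, ⟪v, R h⟫ = ⟪w, h⟫ := fun h => by
    rw [← R.inner_map_map w h, ← Submodule.reflection_sub hvw, Submodule.reflection_reflection]
  simpa [hR] using (integral_ball_zero_add_isometry R (fun h => ⟪v, h⟫ ^ 2) 0 r).symm

theorem finrank_mul_integral_ball_zero_inner_sq (z : E) (r : ℝ) :
    Module.finrank ℝ E * ∫ h in ball 0 r, ⟪z, h⟫ ^ 2 =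
      ‖z‖ ^ 2 * ∫ h in ball (0 : E) r, ‖h‖ ^ 2 := by
  set b := stdOrthonormalBasis ℝ E
  have hint : ∀ v : E, IntegrableOn (fun h => ⟪v, h⟫ ^ 2) (ball 0 r) := fun v =>
    integrableOn_ball_of_continuousOn_closedBall (by fun_prop)
  have hcoord : ∀ i, ∫ h in ball 0 r, ⟪z, h⟫ ^ 2 = ‖z‖ ^ 2 * ∫ h in ball 0 r, ⟪b i, h⟫ ^ 2 :=
    fun i => by
      rw [integral_ball_zero_inner_sq_eq (w := ‖z‖ • b i) (by simp [norm_smul]) r,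
        ← integral_const_mul]
      simp only [real_inner_smul_left, mul_pow]
  calc Module.finrank ℝ E * ∫ h in ball 0 r, ⟪z, h⟫ ^ 2
      = ∑ i, ‖z‖ ^ 2 * ∫ h in ball 0 r, ⟪b i, h⟫ ^ 2 := by
        simp only [← hcoord, Finset.sum_const, Finset.card_univ, Fintype.card_fin, nsmul_eq_mul]
    _ = ‖z‖ ^ 2 * ∫ h in ball 0 r, ∑ i, ⟪b i, h⟫ ^ 2 := by
        rw [← Finset.mul_sum, integral_finsetSum _ fun i _ => hint (b i)]
    _ = ‖z‖ ^ 2 * ∫ h in ball (0 : E) r, ‖h‖ ^ 2 := by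
        simp only [← b.sum_sq_norm_inner_right, Real.norm_eq_abs, sq_abs]

end BallSymmetrization

section RieszKernel

open scoped RealInnerProductSpace

variable {E : Type*} [NormedAddCommGroup E] [InnerProductSpace ℝ E]

theorem norm_add_rpow_neg_eq {z : E} (hz : z ≠ 0) (h : E) (a : ℝ) :
    ‖z + h‖ ^ (-a) = ‖z‖ ^ (-a) * (1 + (‖h‖ ^ 2 + 2 * ⟪z, h⟫) / ‖z‖ ^ 2) ^ (-(a / 2)) := by
  have hz' : 0 < ‖z‖ := norm_pos_iff.2 hz
  have hsq : 1 + (‖h‖ ^ 2 + 2 * ⟪z, h⟫) / ‖z‖ ^ 2 = (‖z + h‖ / ‖z‖) ^ 2 := by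
    rw [div_pow, norm_add_sq_real]
    field_simp
    ring
  rw [hsq, ← Real.rpow_natCast_mul (by positivity), show ((2 : ℕ) : ℝ) * -(a / 2) = -a by
    push_cast; ring, ← Real.mul_rpow (by positivity) (by positivity),
    mul_div_cancel₀ _ hz'.ne']

theorem abs_norm_sq_add_inner_div_le {z h : E} {κ : ℝ} (hκ₀ : 0 ≤ κ) (hκ₁ : κ ≤ 1)
    (hz : z ≠ 0) (hh : ‖h‖ ≤ κ * ‖z‖) : |(‖h‖ ^ 2 + 2 * ⟪z, h⟫) / ‖z‖ ^ 2| ≤ 3 * κ := by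
  have hinner : |⟪z, h⟫| ≤ κ * ‖z‖ ^ 2 := by
    calc |⟪z, h⟫| ≤ ‖z‖ * ‖h‖ := abs_real_inner_le_norm z h
      _ ≤ ‖z‖ * (κ * ‖z‖) := by gcongr
      _ = κ * ‖z‖ ^ 2 := by ring
  have hnorm : ‖h‖ ^ 2 ≤ κ * ‖z‖ ^ 2 := by
    calc ‖h‖ ^ 2 ≤ (κ * ‖z‖) ^ 2 := by gcongr
      _ = κ * (κ * ‖z‖ ^ 2) := by ring
      _ ≤ 1 * (κ * ‖z‖ ^ 2) := by gcongr
      _ = κ * ‖z‖ ^ 2 := one_mul _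
  have hz' : 0 < ‖z‖ := norm_pos_iff.2 hz
  rw [abs_div, abs_of_pos (pow_pos hz' 2), div_le_iff₀ (by positivity)]
  rw [abs_le] at hinner ⊢
  constructor <;> nlinarith [sq_nonneg ‖h‖]

theorem exists_le_norm_add_rpow_neg_add_norm_sub_rpow_neg {a m : ℝ} (hm₀ : 0 ≤ m)
    (hm : m < a * (a + 2) / 8) :
    ∃ κ ∈ Set.Ioo (0 : ℝ) 1, ∀ z h : E, z ≠ 0 → ‖h‖ ≤ κ * ‖z‖ →
      ‖z‖ ^ (-a) * (2 + 8 * m / ‖z‖ ^ 4 * ⟪z, h⟫ ^ 2 - a / ‖z‖ ^ 2 * ‖h‖ ^ 2) ≤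
        ‖z + h‖ ^ (-a) + ‖z - h‖ ^ (-a) := by
  obtain ⟨δ, hδ, hlow⟩ := Metric.eventually_nhds_iff.1
    (eventually_le_one_add_rpow_neg (q := a / 2) (m := m) (by linarith))
  refine ⟨min (δ / 4) (1 / 2), ⟨by positivity, (min_le_right _ _).trans_lt (by norm_num)⟩,
    fun z h hz hh => ?_⟩
  have hside : ∀ k : E, ‖k‖ = ‖h‖ →
      ‖z‖ ^ (-a) * (1 - a / 2 * ((‖h‖ ^ 2 + 2 * ⟪z, k⟫) / ‖z‖ ^ 2) +
        m * ((‖h‖ ^ 2 + 2 * ⟪z, k⟫) / ‖z‖ ^ 2) ^ 2) ≤ ‖z + k‖ ^ (-a) := fun k hk => by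
    rw [norm_add_rpow_neg_eq hz, ← hk]
    gcongr
    refine hlow ?_
    rw [Real.dist_eq, sub_zero]
    calc |(‖k‖ ^ 2 + 2 * ⟪z, k⟫) / ‖z‖ ^ 2| ≤ 3 * min (δ / 4) (1 / 2) :=
          abs_norm_sq_add_inner_div_le (by positivity)
            ((min_le_right _ _).trans (by norm_num)) hz (hk.trans_le hh)
      _ ≤ 3 * (δ / 4) := by gcongr; exact min_le_left _ _
      _ < δ := by linarith
  have hminus := hside (-h) (norm_neg h)
  rw [inner_neg_right, ← sub_eq_add_neg] at hminus
  refine le_trans ?_ (add_le_add (hside h rfl) hminus)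
  rw [← mul_add]
  gcongr
  have hz' : 0 < ‖z‖ := norm_pos_iff.2 hz
  have hquartic : 0 ≤ 2 * m * ‖h‖ ^ 4 / ‖z‖ ^ 4 := by positivity
  field_simp at hquartic ⊢
  nlinarith

theorem continuousOn_norm_rpow_neg {F : Type*} [NormedAddCommGroup F] (a : ℝ) :
    ContinuousOn (fun z : F => ‖z‖ ^ (-a)) {0}ᶜ :=
  continuous_norm.continuousOn.rpow_const fun _ hz => Or.inl (norm_ne_zero_iff.2 hz)

variable [FiniteDimensional ℝ E] [MeasurableSpace E] [BorelSpace E]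

theorem integral_ball_zero_norm_sq_pos [Nontrivial E] {r : ℝ} (hr : 0 < r) :
    0 < ∫ h in ball (0 : E) r, ‖h‖ ^ 2 := by
  rw [setIntegral_pos_iff_support_of_nonneg_ae (ae_of_all _ fun h => by positivity)
    (integrableOn_ball_of_continuousOn_closedBall (by fun_prop))]
  have hsupp : Function.support (fun h : E => ‖h‖ ^ 2) ∩ ball 0 r = ball 0 r \ {0} := by
    ext h
    simp [and_comm]
  rw [hsupp, measure_sdiff_null (measure_singleton _)]
  exact measure_ball_pos volume 0 hr

theorem integral_ball_zero_const_add_inner_sq_sub_norm_sq [Nontrivial E] (α β γ : ℝ) (z : E)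
    (r : ℝ) :
    ∫ h in ball 0 r, (α + β * ⟪z, h⟫ ^ 2 - γ * ‖h‖ ^ 2) =
      α * volume.real (ball (0 : E) r) +
        (β * ‖z‖ ^ 2 / Module.finrank ℝ E - γ) * ∫ h in ball (0 : E) r, ‖h‖ ^ 2 := by
  have hd : (Module.finrank ℝ E : ℝ) ≠ 0 := Nat.cast_ne_zero.2 Module.finrank_pos.ne'
  have hmoment := finrank_mul_integral_ball_zero_inner_sq z r
  rw [integral_sub (integrableOn_ball_of_continuousOn_closedBall (by fun_prop))
      (integrableOn_ball_of_continuousOn_closedBall (by fun_prop)),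
    integral_add (integrableOn_ball_of_continuousOn_closedBall (by fun_prop))
      (integrableOn_ball_of_continuousOn_closedBall (by fun_prop)),
    integral_const_mul, integral_const_mul, setIntegral_const, smul_eq_mul]
  field_simp
  linear_combination β * hmoment

theorem integrableOn_ball_norm_rpow_neg {z : E} {r : ℝ} (hr : r < ‖z‖) (a : ℝ) :
    IntegrableOn (fun w : E => ‖w‖ ^ (-a)) (ball z r) := by
  refine integrableOn_ball_of_continuousOn_closedBall
    ((continuousOn_norm_rpow_neg a).mono fun w hw => ?_)
  rintro rfl
  exact (mem_closedBall'.1 hw).not_gt (by simpa using hr)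

-- `|w| ^ (-a)` has Laplacian `a * (a + 2 - d) * |w| ^ (-a - 2)`, which is positive for `d - 2 < a`.
theorem exists_norm_rpow_neg_lt_setAverage {a : ℝ} (ha : 0 < a)
    (had : (Module.finrank ℝ E : ℝ) - 2 < a) :
    ∃ κ ∈ Set.Ioo (0 : ℝ) 1, ∀ (z : E) (r : ℝ), 0 < r → r ≤ κ * ‖z‖ →
      ‖z‖ ^ (-a) < ⨍ w in ball z r, ‖w‖ ^ (-a) := by
  set d := (Module.finrank ℝ E : ℝ) with hd
  have : 0 ≤ d := Nat.cast_nonneg _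
  -- The midpoint of the admissible range: positivity below needs `a * d / 8 < m`.
  set m := a * (a + 2 + d) / 16
  obtain ⟨κ, ⟨hκ₀, hκ₁⟩, hκ⟩ := exists_le_norm_add_rpow_neg_add_norm_sub_rpow_neg (E := E)
    (a := a) (m := m) (by positivity) (by simp only [m]; nlinarith)
  refine ⟨κ, ⟨hκ₀, hκ₁⟩, fun z r hr hrz => ?_⟩
  have hz : 0 < ‖z‖ := pos_of_mul_pos_right (hr.trans_le hrz) hκ₀.le
  have : Nontrivial E := ⟨z, 0, norm_pos_iff.1 hz⟩
  have hd_pos : 0 < d := Nat.cast_pos.2 Module.finrank_pos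
  have hint : IntegrableOn (fun w : E => ‖w‖ ^ (-a)) (ball z r) :=
    integrableOn_ball_norm_rpow_neg (hrz.trans_lt (mul_lt_of_lt_one_left hz hκ₁)) a
  have hpair : ‖z‖ ^ (-a) *
      ∫ h in ball 0 r, (2 + 8 * m / ‖z‖ ^ 4 * ⟪z, h⟫ ^ 2 - a / ‖z‖ ^ 2 * ‖h‖ ^ 2) ≤
        2 * ∫ w in ball z r, ‖w‖ ^ (-a) := by
    rw [← integral_ball_zero_add_add_sub hint, ← integral_const_mul]
    refine setIntegral_mono_on (integrableOn_ball_of_continuousOn_closedBall (by fun_prop))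
      (integrableOn_ball_zero_add_add_sub hint) measurableSet_ball fun h hh => ?_
    exact hκ z h (norm_pos_iff.1 hz) ((mem_ball_zero_iff.1 hh).le.trans hrz)
  have hcoeff : 0 < 8 * m / ‖z‖ ^ 4 * ‖z‖ ^ 2 / d - a / ‖z‖ ^ 2 := by
    rw [show 8 * m / ‖z‖ ^ 4 * ‖z‖ ^ 2 / d - a / ‖z‖ ^ 2 = a * (a + 2 - d) / (2 * d * ‖z‖ ^ 2) by
      simp only [m]; field_simp; ring]
    exact div_pos (mul_pos ha (by linarith)) (by positivity)
  have hexcess := mul_pos (Real.rpow_pos_of_pos hz (-a))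
    (mul_pos hcoeff (integral_ball_zero_norm_sq_pos (E := E) hr))
  rw [setAverage_eq, smul_eq_mul, lt_inv_mul_iff₀ (volume_real_ball_pos z hr), measureReal_def,
    Measure.addHaar_ball_center, ← measureReal_def]
  rw [integral_ball_zero_const_add_inner_sq_sub_norm_sq, ← hd] at hpair
  linarith

end RieszKernel

section GreenMinorant

open scoped RealInnerProductSpace

variable {E : Type*} [NormedAddCommGroup E] [InnerProductSpace ℝ E]

/-- A substitute for the Green function of the unit ball with pole `y`, `‖y‖ ≤ 1 / 2`: the Riesz
kernel minus an affine function of `x` which dominates it on the unit sphere. With `s = ⟪x, y⟫`,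
the affine function is the chord of `s ↦ (1 - s) ^ (-a)` over `[-1 / 2, 1 / 2]`. -/
def greenMinorant (a : ℝ) (x y : E) : ℝ :=
  ‖x - y‖ ^ (-a) - (((1 / 2) ^ (-a) + (3 / 2) ^ (-a)) / 2 +
    ((1 / 2) ^ (-a) - (3 / 2) ^ (-a)) * ⟪x, y⟫)

theorem greenMinorant_nonpos_of_norm_eq_one {a : ℝ} (ha : 0 ≤ a) {x y : E} (hx : ‖x‖ = 1)
    (hy : ‖y‖ ≤ 1 / 2) : greenMinorant a x y ≤ 0 := by
  have hinner : |⟪x, y⟫| ≤ 1 / 2 := by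
    simpa [hx] using (abs_real_inner_le_norm x y).trans
      (mul_le_mul hx.le hy (norm_nonneg _) one_pos.le)
  have hdist : 1 - ⟪x, y⟫ ≤ ‖x - y‖ := by
    calc 1 - ⟪x, y⟫ = ⟪x, x - y⟫ := by
          rw [inner_sub_right, real_inner_self_eq_norm_sq, hx, one_pow]
      _ ≤ ‖x - y‖ := by simpa [hx] using real_inner_le_norm x (x - y)
  have hpos : 0 < 1 - ⟪x, y⟫ := by linarith [(abs_le.1 hinner).2]
  exact sub_nonpos.2 ((Real.rpow_le_rpow_of_nonpos hpos hdist (neg_nonpos.2 ha)).trans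
    (one_sub_rpow_neg_le_chord ha hinner))

theorem greenMinorant_le_norm_rpow_neg {a : ℝ} (ha : 0 ≤ a) {x y : E} (hx : ‖x‖ ≤ 1)
    (hy : ‖y‖ ≤ 1 / 2) : greenMinorant a x y ≤ ‖x - y‖ ^ (-a) := by
  have hinner : |⟪x, y⟫| ≤ 1 / 2 := by
    simpa using (abs_real_inner_le_norm x y).trans (mul_le_mul hx hy (norm_nonneg _) one_pos.le)
  refine sub_le_self _ (le_trans ?_ (one_sub_rpow_neg_le_chord ha hinner))
  exact Real.rpow_nonneg (by linarith [(abs_le.1 hinner).2]) _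

theorem le_greenMinorant_zero {a : ℝ} (ha : 0 ≤ a) {y : E} (hy₀ : y ≠ 0) (hy : ‖y‖ ≤ 1 / 2) :
    ((1 / 2) ^ (-a) - (3 / 2) ^ (-a)) / 2 ≤ greenMinorant a 0 y := by
  have := Real.rpow_le_rpow_of_nonpos (norm_pos_iff.2 hy₀) hy (neg_nonpos.2 ha)
  rw [greenMinorant, zero_sub, norm_neg, inner_zero_left]
  linarith

theorem continuousOn_uncurry_greenMinorant (a : ℝ) {A K : Set E} (hAK : Disjoint A K) :
    ContinuousOn (Function.uncurry (greenMinorant a)) (A ×ˢ K) := by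
  have hriesz : ContinuousOn (fun q : E × E => ‖q.1 - q.2‖ ^ (-a)) (A ×ˢ K) :=
    (continuousOn_norm_rpow_neg a).comp (by fun_prop) fun _ hq =>
      sub_ne_zero.2 (hAK.ne_of_mem hq.1 hq.2)
  exact hriesz.sub (by fun_prop)

variable [FiniteDimensional ℝ E] [MeasurableSpace E] [BorelSpace E]

theorem exists_greenMinorant_lt_setAverage {a : ℝ} (ha : 0 < a)
    (had : (Module.finrank ℝ E : ℝ) - 2 < a) :
    ∃ κ ∈ Set.Ioo (0 : ℝ) 1, ∀ (x y : E) (r : ℝ), 0 < r → r ≤ κ * ‖x - y‖ →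
      greenMinorant a x y < ⨍ w in ball x r, greenMinorant a w y := by
  obtain ⟨κ, ⟨hκ₀, hκ₁⟩, hκ⟩ := exists_norm_rpow_neg_lt_setAverage (E := E) ha had
  refine ⟨κ, ⟨hκ₀, hκ₁⟩, fun x y r hr hrxy => ?_⟩
  have hclosed : ContinuousOn (fun w => ‖w - y‖ ^ (-a)) (closedBall x r) :=
    (continuousOn_norm_rpow_neg a).comp (by fun_prop) fun w hw hwy => by
      have hr_lt : r < ‖x - y‖ := hrxy.trans_lt (mul_lt_of_lt_one_left (by nlinarith) hκ₁)
      rw [sub_eq_zero.1 hwy, mem_closedBall', dist_eq_norm] at hw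
      exact hw.not_gt hr_lt
  have hriesz : ‖x - y‖ ^ (-a) < ⨍ w in ball x r, ‖w - y‖ ^ (-a) :=
    (hκ (x - y) r hr hrxy).trans_eq
      (setAverage_ball_comp_sub (fun w : E => ‖w‖ ^ (-a)) x y r).symm
  set c : ℝ := (1 / 2) ^ (-a) - (3 / 2) ^ (-a)
  have haffine := setAverage_ball_const_add_inner
    (((1 / 2) ^ (-a) + (3 / 2) ^ (-a)) / 2) x (c • y) hr
  simp only [real_inner_smul_right] at haffine
  calc greenMinorant a x y
      < (⨍ w in ball x r, ‖w - y‖ ^ (-a)) -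
          ⨍ w in ball x r, (((1 / 2) ^ (-a) + (3 / 2) ^ (-a)) / 2 + c * ⟪w, y⟫) := by
        rw [haffine]
        exact sub_lt_sub_right hriesz _
    _ = ⨍ w in ball x r, greenMinorant a w y := by
        simp only [setAverage_eq, greenMinorant]
        rw [integral_sub (integrableOn_ball_of_continuousOn_closedBall hclosed)
          (integrableOn_ball_of_continuousOn_closedBall (by fun_prop)), smul_sub]

end GreenMinorant

section KernelIntegral

theorem setIntegral_lt_setIntegral_of_forall_lt {Y : Type*} [MeasurableSpace Y] {ν : Measure Y}
    {K : Set Y} (hK : MeasurableSet K) (hνK : ν K ≠ 0) {f g : Y → ℝ} (hf : IntegrableOn f K ν)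
    (hg : IntegrableOn g K ν) (hfg : ∀ y ∈ K, f y < g y) :
    ∫ y in K, f y ∂ν < ∫ y in K, g y ∂ν := by
  have hsupp : Function.support (fun y => g y - f y) ∩ K = K :=
    Set.inter_eq_right.2 fun y hy => (sub_pos.2 (hfg y hy)).ne'
  rw [← sub_pos, ← integral_sub hg hf, setIntegral_pos_iff_support_of_nonneg_ae
    (ae_restrict_of_forall_mem hK fun y hy => (sub_pos.2 (hfg y hy)).le) (hg.sub hf), hsupp]
  exact pos_iff_ne_zero.2 hνK

variable {X Y : Type*} [TopologicalSpace Y] [T2Space Y] [MeasurableSpace Y] {ν : Measure Y}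
  [IsFiniteMeasureOnCompacts ν] {K : Set Y} {k : X → Y → ℝ}

theorem continuousOn_setIntegral_kernel [OpensMeasurableSpace Y] [TopologicalSpace X]
    [FirstCountableTopology X] {A : Set X} (hA : IsCompact A) (hK : IsCompact K)
    (hk : ContinuousOn (Function.uncurry k) (A ×ˢ K)) :
    ContinuousOn (fun x => ∫ y in K, k x y ∂ν) A := by
  obtain ⟨M, hM⟩ := (hA.prod hK).exists_bound_of_continuousOn hk
  exact continuousOn_of_dominated (bound := fun _ => M)
    (fun x hx => (hk.uncurry_left x hx).aestronglyMeasurable_of_isCompact hK hK.measurableSet)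
    (fun x hx => ae_restrict_of_forall_mem hK.measurableSet fun y hy => hM (x, y) ⟨hx, hy⟩)
    (integrableOn_const hK.measure_ne_top)
    (ae_restrict_of_forall_mem hK.measurableSet fun y hy => hk.uncurry_right y hy)

theorem setIntegral_lt_setAverage_setIntegral [BorelSpace Y] [SFinite ν] [MetricSpace X]
    [ProperSpace X] [SecondCountableTopology X] [MeasurableSpace X] [BorelSpace X] {μ : Measure X}
    [SFinite μ] [IsFiniteMeasureOnCompacts μ] (hK : IsCompact K) (hνK : ν K ≠ 0) {x : X} {r : ℝ}
    (hr : 0 ≤ r) (hk : ContinuousOn (Function.uncurry k) (closedBall x r ×ˢ K))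
    (hlt : ∀ y ∈ K, k x y < ⨍ w in ball x r, k w y ∂μ) :
    ∫ y in K, k x y ∂ν < ⨍ w in ball x r, ∫ y in K, k w y ∂ν ∂μ := by
  have hint : Integrable (Function.uncurry k)
      ((μ.restrict (ball x r)).prod (ν.restrict K)) := by
    rw [Measure.prod_restrict]
    exact (hk.integrableOn_compact ((isCompact_closedBall x r).prod hK)).mono_set
      (Set.prod_mono_left ball_subset_closedBall)
  have haverage : IntegrableOn (fun y => ⨍ w in ball x r, k w y ∂μ) K ν := by
    simp only [setAverage_eq, smul_eq_mul]
    exact hint.integral_prod_right.const_mul _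
  calc ∫ y in K, k x y ∂ν < ∫ y in K, ⨍ w in ball x r, k w y ∂μ ∂ν :=
        setIntegral_lt_setIntegral_of_forall_lt hK.measurableSet hνK
          ((hk.uncurry_left x (mem_closedBall_self hr)).integrableOn_compact hK) haverage hlt
    _ = ⨍ w in ball x r, ∫ y in K, k w y ∂ν ∂μ := by
        simp only [setAverage_eq]
        rw [integral_smul, integral_integral_swap hint]

end KernelIntegral

section GreenPotential

variable {E : Type*} [NormedAddCommGroup E] [InnerProductSpace ℝ E] [MeasurableSpace E]
  {ν : Measure E} {K : Set E} {a : ℝ}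

/-- The potential `x ↦ ∫ y in K, greenMinorant a x y ∂ν`, which plays the role of minus the Green
potential of the restriction of `ν` to `K`. -/
def greenPotential (a : ℝ) (ν : Measure E) (K : Set E) (x : E) : ℝ :=
  ∫ y in K, greenMinorant a x y ∂ν

theorem greenPotential_nonpos_of_norm_eq_one (ha : 0 ≤ a) (hK : MeasurableSet K)
    (hK₂ : K ⊆ closedBall 0 (1 / 2)) {x : E} (hx : ‖x‖ = 1) : greenPotential a ν K x ≤ 0 :=
  setIntegral_nonpos hK fun _ hy =>
    greenMinorant_nonpos_of_norm_eq_one ha hx (mem_closedBall_zero_iff.1 (hK₂ hy))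

variable [BorelSpace E] [IsFiniteMeasureOnCompacts ν]

theorem continuousOn_greenPotential {A : Set E} (hA : IsCompact A) (hK : IsCompact K)
    (hAK : Disjoint A K) : ContinuousOn (greenPotential a ν K) A :=
  continuousOn_setIntegral_kernel hA hK (continuousOn_uncurry_greenMinorant a hAK)

theorem le_greenPotential_zero (ha : 0 ≤ a) (hK : IsCompact K) (hK₀ : 0 ∉ K)
    (hK₂ : K ⊆ closedBall 0 (1 / 2)) :
    ((1 / 2) ^ (-a) - (3 / 2) ^ (-a)) / 2 * ν.real K ≤ greenPotential a ν K 0 := by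
  have hcont : ContinuousOn (greenMinorant a 0) K :=
    (continuousOn_uncurry_greenMinorant a (Set.disjoint_singleton_left.2 hK₀)).uncurry_left 0
      (Set.mem_singleton 0)
  rw [mul_comm, ← smul_eq_mul, ← setIntegral_const]
  exact setIntegral_mono_on (integrableOn_const hK.measure_ne_top) (hcont.integrableOn_compact hK)
    hK.measurableSet fun y hy => le_greenMinorant_zero ha (ne_of_mem_of_not_mem hy hK₀)
      (mem_closedBall_zero_iff.1 (hK₂ hy))

variable [FiniteDimensional ℝ E] [SFinite ν]

theorem exists_greenPotential_lt_setAverage (ha : 0 < a)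
    (had : (Module.finrank ℝ E : ℝ) - 2 < a) (hK : IsCompact K) (hνK : ν K ≠ 0) {x : E}
    (hx : x ∉ K) {ρ : ℝ} (hρ : 0 < ρ) :
    ∃ r > 0, r ≤ ρ ∧ IntegrableOn (greenPotential a ν K) (ball x r) ∧
      greenPotential a ν K x < ⨍ w in ball x r, greenPotential a ν K w := by
  obtain ⟨κ, ⟨hκ₀, hκ₁⟩, hκ⟩ := exists_greenMinorant_lt_setAverage (E := E) ha had
  have hdist : 0 < infDist x K :=
    (hK.isClosed.notMem_iff_infDist_pos (nonempty_of_measure_ne_zero hνK)).1 hx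
  refine ⟨min ρ (κ * infDist x K), by positivity, min_le_left _ _, ?_⟩
  set r := min ρ (κ * infDist x K)
  have hr : 0 < r := by positivity
  have hrK : ∀ y ∈ K, r ≤ κ * ‖x - y‖ := fun y hy => by
    rw [← dist_eq_norm]
    exact (min_le_right _ _).trans (by gcongr; exact infDist_le_dist_of_mem hy)
  have hdisj : Disjoint (closedBall x r) K := disjoint_closedBall_of_lt_infDist
    ((min_le_right _ _).trans_lt (mul_lt_of_lt_one_left hdist hκ₁))
  exact ⟨integrableOn_ball_of_continuousOn_closedBall
      (continuousOn_greenPotential (isCompact_closedBall x r) hK hdisj),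
    setIntegral_lt_setAverage_setIntegral hK hνK hr.le
      (continuousOn_uncurry_greenMinorant a hdisj) fun y hy => hκ x y r hr (hrK y hy)⟩

namespace IsSubharmonicOn

variable {u : E → ℝ}

theorem add_mul_greenPotential_nonpos (hu : IsSubharmonicOn u (closedBall 0 1))
    (hu₀ : ∀ x ∈ closedBall 0 1, u x ≤ 0) (ha : 0 < a)
    (had : (Module.finrank ℝ E : ℝ) - 2 < a) (hK : IsCompact K)
    (hK₂ : K ⊆ closedBall 0 (1 / 2)) (hνK : ν K ≠ 0) {t c : ℝ} (hc : 0 < c)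
    (hKt : ∀ y ∈ K, u y < -t) (ht : ∀ x ∈ closedBall 0 1, c * greenPotential a ν K x ≤ t) :
    ∀ x ∈ closedBall 0 1, u x + c * greenPotential a ν K x ≤ 0 := by
  set A := closedBall 0 1 ∩ u ⁻¹' Set.Ici (-t)
  have hA : IsCompact A :=
    hu.upperSemicontinuousOn.isCompact_inter_preimage_Ici (isCompact_closedBall 0 1) (-t)
  have hAK : Disjoint A K :=
    Set.disjoint_left.2 fun x hxA hxK => (Set.mem_Ici.1 hxA.2).not_gt (hKt x hxK)
  refine hu.add_nonpos hA Set.inter_subset_left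
    ((continuousOn_greenPotential hA hK hAK).const_mul c) (fun x hx => ?_) fun x hxA hx => ?_
  · have hxt : u x < -t := not_le.1 fun h => hx.2 ⟨hx.1, h⟩
    linarith [ht x hx.1]
  · have hx₁ : ‖x‖ ≠ 1 := fun h => by
      nlinarith [hu₀ x hxA.1,
        greenPotential_nonpos_of_norm_eq_one (ν := ν) ha.le hK.measurableSet hK₂ h]
    have hx_lt : ‖x‖ < 1 := (mem_closedBall_zero_iff.1 hxA.1).lt_of_ne hx₁
    obtain ⟨r, hr, hr_le, hint, hlt⟩ := exists_greenPotential_lt_setAverage ha had hK hνK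
      (hAK.notMem_of_mem_left hxA) (sub_pos.2 hx_lt)
    refine ⟨r, hr, closedBall_subset_closedBall' (by rw [dist_zero_right]; linarith),
      hint.const_mul c, ?_⟩
    rw [setAverage_eq, integral_const_mul, smul_eq_mul, mul_left_comm, ← smul_eq_mul (_⁻¹),
      ← setAverage_eq]
    exact mul_lt_mul_of_pos_left hlt hc

theorem mul_measureReal_le (hu : IsSubharmonicOn u (closedBall 0 1))
    (hu₀ : ∀ x ∈ closedBall 0 1, u x ≤ 0) (ha : 0 < a)
    (had : (Module.finrank ℝ E : ℝ) - 2 < a) (hK : IsCompact K) (hK₀ : 0 ∉ K)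
    (hK₂ : K ⊆ closedBall 0 (1 / 2)) {t M : ℝ} (ht : 0 < t) (hM : 0 ≤ M)
    (hKt : ∀ y ∈ K, u y < -t) (hKM : ∀ x ∈ closedBall 0 1, greenPotential a ν K x ≤ M) :
    ((1 / 2) ^ (-a) - (3 / 2) ^ (-a)) / 2 * ν.real K ≤ M * (|u 0| / t) := by
  rcases eq_or_ne (ν K) 0 with hνK | hνK
  · rw [measureReal_def, hνK, ENNReal.toReal_zero, mul_zero]
    positivity
  have hmass := le_greenPotential_zero (ν := ν) ha.le hK hK₀ hK₂
  have hM : 0 < M := by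
    have hgap := sub_pos.2 (three_halves_rpow_neg_lt ha)
    have hνK_pos : 0 < ν.real K := ENNReal.toReal_pos hνK hK.measure_ne_top
    exact lt_of_lt_of_le (by positivity) (hmass.trans (hKM 0 (mem_closedBall_self zero_le_one)))
  have hscale : ∀ x ∈ closedBall 0 1, t / M * greenPotential a ν K x ≤ t := fun x hx => by
    calc t / M * greenPotential a ν K x ≤ t / M * M := by gcongr; exact hKM x hx
      _ = t := div_mul_cancel₀ t hM.ne'
  have hzero := hu.add_mul_greenPotential_nonpos hu₀ ha had hK hK₂ hνK (div_pos ht hM) hKt hscale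
    0 (mem_closedBall_self zero_le_one)
  refine hmass.trans ?_
  rw [abs_of_nonpos (hu₀ 0 (mem_closedBall_self zero_le_one)), ← mul_div_assoc,
    le_div_iff₀ ht]
  rw [div_mul_eq_mul_div, ← le_neg_iff_add_nonpos_left, div_le_iff₀ hM] at hzero
  linarith

end IsSubharmonicOn

end GreenPotential

section RieszPotential

variable {E : Type*} [NormedAddCommGroup E] [InnerProductSpace ℝ E] [FiniteDimensional ℝ E]
  [MeasurableSpace E] [BorelSpace E] {a : ℝ}

theorem integrableOn_ball_zero_norm_rpow_neg (ha : 0 ≤ a) (had : a < Module.finrank ℝ E)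
    (R : ℝ) : IntegrableOn (fun z : E => ‖z‖ ^ (-a)) (ball 0 R) := by
  have hmeas : AEStronglyMeasurable (fun z : E => ‖z‖ ^ (-a)) :=
    (measurable_norm.pow_const (-a)).aestronglyMeasurable
  refine integrableOn_ball_of_norm_le_rpow (C := 1) (α := a) (Nat.cast_pos.1 (ha.trans_lt had)) had
    (ae_of_all _ fun z => ?_) hmeas
  rw [one_mul, Real.norm_of_nonneg (by positivity)]

theorem integral_ball_zero_norm_rpow_neg (a : ℝ) {R : ℝ} (hR : 0 < R) :
    ∫ z in ball (0 : E) R, ‖z‖ ^ (-a) =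
      (∫ z in ball (0 : E) 1, ‖z‖ ^ (-a)) * R ^ (Module.finrank ℝ E - a) := by
  have hscale := Measure.setIntegral_comp_smul_of_pos volume (fun z : E => ‖z‖ ^ (-a))
    (ball 0 1) hR
  simp only [norm_smul, Real.norm_of_nonneg hR.le, Real.mul_rpow hR.le (norm_nonneg _)] at hscale
  rw [integral_const_mul, smul_unitBall_of_pos hR, smul_eq_mul,
    eq_inv_mul_iff_mul_eq₀ (by positivity)] at hscale
  rw [← hscale, Real.rpow_sub hR, Real.rpow_neg hR.le, Real.rpow_natCast]
  ring

theorem integrableOn_ball_norm_sub_rpow_neg (ha : 0 ≤ a) (had : a < Module.finrank ℝ E) (x : E)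
    (R : ℝ) : IntegrableOn (fun y => ‖x - y‖ ^ (-a)) (ball x R) := by
  rw [← integrableOn_ball_zero_add_isometry_iff (LinearIsometryEquiv.refl ℝ E)]
  simpa using integrableOn_ball_zero_norm_rpow_neg (E := E) ha had R

theorem setIntegral_norm_sub_rpow_neg_le (ha : 0 ≤ a) (had : a < Module.finrank ℝ E) {K : Set E}
    (hK : volume K ≠ ⊤) (x : E) {R : ℝ} (hR : 0 < R) :
    ∫ y in K, ‖x - y‖ ^ (-a) ≤
      (∫ z in ball (0 : E) 1, ‖z‖ ^ (-a)) * R ^ (Module.finrank ℝ E - a) +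
        R ^ (-a) * volume.real K := by
  set f : E → ℝ := fun y => ‖x - y‖ ^ (-a)
  have hf₀ : ∀ y, 0 ≤ f y := fun y => Real.rpow_nonneg (norm_nonneg _) _
  have hball : ∫ y in ball x R, f y =
      (∫ z in ball (0 : E) 1, ‖z‖ ^ (-a)) * R ^ (Module.finrank ℝ E - a) := by
    rw [← integral_ball_zero_norm_rpow_neg a hR,
      ← integral_ball_zero_add_isometry (LinearIsometryEquiv.refl ℝ E) f]
    simp [f]
  have hint : Integrable ((ball x R).indicator f) :=
    (integrableOn_ball_norm_sub_rpow_neg ha had x R).integrable_indicator measurableSet_ball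
  have hbound : ∀ y, f y ≤ (ball x R).indicator f y + R ^ (-a) := fun y => by
    by_cases hy : y ∈ ball x R
    · rw [Set.indicator_of_mem hy]
      exact le_add_of_nonneg_right (by positivity)
    · rw [Set.indicator_of_notMem hy, zero_add]
      rw [mem_ball', not_lt, dist_eq_norm] at hy
      exact Real.rpow_le_rpow_of_nonpos hR hy (neg_nonpos.2 ha)
  calc ∫ y in K, f y ≤ ∫ y in K, ((ball x R).indicator f y + R ^ (-a)) :=
        integral_mono_of_nonneg (ae_of_all _ hf₀)
          (hint.integrableOn.add (integrableOn_const hK)) (ae_of_all _ hbound)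
    _ = (∫ y in K, (ball x R).indicator f y) + R ^ (-a) * volume.real K := by
        rw [integral_add hint.integrableOn (integrableOn_const hK), setIntegral_const, smul_eq_mul,
          mul_comm (R ^ (-a))]
    _ ≤ (∫ y in ball x R, f y) + R ^ (-a) * volume.real K := by
        rw [← integral_indicator measurableSet_ball]
        exact add_le_add_left (setIntegral_le_integral hint
          (ae_of_all _ (Set.indicator_nonneg fun y _ => hf₀ y))) _
    _ = _ := by rw [hball]

end RieszPotential

section WeakTypeEstimate

variable {E : Type*} [NormedAddCommGroup E] [InnerProductSpace ℝ E] [FiniteDimensional ℝ E]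
  [MeasurableSpace E] [BorelSpace E] {a : ℝ}

theorem greenPotential_volume_le (ha : 0 ≤ a) (had : a < Module.finrank ℝ E) {K : Set E}
    (hK : IsCompact K) (hK₂ : K ⊆ closedBall 0 (1 / 2)) {x : E} (hx : ‖x‖ ≤ 1) {R : ℝ}
    (hR : 0 < R) :
    greenPotential a volume K x ≤
      (∫ z in ball (0 : E) 1, ‖z‖ ^ (-a)) * R ^ (Module.finrank ℝ E - a) +
        R ^ (-a) * volume.real K := by
  obtain ⟨ρ, hρ⟩ := hK.isBounded.subset_ball x
  have hriesz : IntegrableOn (fun y => ‖x - y‖ ^ (-a)) K :=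
    (integrableOn_ball_norm_sub_rpow_neg ha had x ρ).mono_set hρ
  refine le_trans ?_ (setIntegral_norm_sub_rpow_neg_le ha had hK.measure_ne_top x hR)
  refine setIntegral_mono_on (hriesz.sub ?_) hriesz hK.measurableSet fun y hy =>
    greenMinorant_le_norm_rpow_neg ha hx (mem_closedBall_zero_iff.1 (hK₂ hy))
  exact ContinuousOn.integrableOn_compact hK (by fun_prop)

namespace IsSubharmonicOn

variable (E) in
theorem exists_volume_real_compact_le (ha : 0 < a) (had₁ : (Module.finrank ℝ E : ℝ) - 2 < a)
    (had₂ : a < Module.finrank ℝ E) :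
    ∃ C ≥ 0, ∀ u : E → ℝ, IsSubharmonicOn u (closedBall 0 1) →
      (∀ x ∈ closedBall 0 1, u x ≤ 0) → ∀ t > 0, ∀ K ⊆ closedBall (0 : E) (1 / 2), IsCompact K →
        0 ∉ K → (∀ y ∈ K, u y < -t) →
          volume.real K ≤ C * (|u 0| / t) ^ (Module.finrank ℝ E / a) := by
  set I := ∫ z in ball (0 : E) 1, ‖z‖ ^ (-a)
  have hI : 0 ≤ I := integral_nonneg fun z => by positivity
  set g : ℝ := ((1 / 2) ^ (-a) - (3 / 2) ^ (-a)) / 2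
  have hg : 0 < g := half_pos (sub_pos.2 (three_halves_rpow_neg_lt ha))
  refine ⟨I * (2 / g) ^ (Module.finrank ℝ E / a), by positivity,
    fun u hu hu₀ t ht K hK₂ hK hK₀ hKt => ?_⟩
  have hcapacity : ∀ R > 0, g * volume.real K ≤
      (I * R ^ (Module.finrank ℝ E - a) + R ^ (-a) * volume.real K) * (|u 0| / t) := fun R hR =>
    hu.mul_measureReal_le hu₀ ha had₁ hK hK₀ hK₂ ht (by positivity) hKt fun x hx =>
      greenPotential_volume_le ha.le had₂ hK hK₂ (mem_closedBall_zero_iff.1 hx) hR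
  calc volume.real K ≤ I * (2 * (|u 0| / t) / g) ^ (Module.finrank ℝ E / a) :=
        le_mul_rpow_of_forall_mul_le ha hg hI (by positivity) hcapacity
    _ = I * (2 / g) ^ (Module.finrank ℝ E / a) * (|u 0| / t) ^ (Module.finrank ℝ E / a) := by
        rw [mul_div_right_comm, Real.mul_rpow (by positivity) (by positivity), mul_assoc]

variable (E) in
theorem exists_volume_le [Nontrivial E] (ha : 0 < a) (had₁ : (Module.finrank ℝ E : ℝ) - 2 < a)
    (had₂ : a < Module.finrank ℝ E) :
    ∃ C ≥ 0, ∀ u : E → ℝ, IsSubharmonicOn u (closedBall 0 1) →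
      (∀ x ∈ closedBall 0 1, u x ≤ 0) → ∀ t > 0,
        volume (ball 0 (1 / 2) ∩ {x | t < |u x|}) ≤
          ENNReal.ofReal (C * (|u 0| / t) ^ (Module.finrank ℝ E / a)) := by
  obtain ⟨C, hC, hcompact⟩ := exists_volume_real_compact_le E ha had₁ had₂
  refine ⟨C, hC, fun u hu hu₀ t ht => ?_⟩
  have hball : ball (0 : E) (1 / 2) ⊆ closedBall 0 1 :=
    ball_subset_closedBall.trans (closedBall_subset_closedBall (by norm_num))
  obtain ⟨U, hU, hUu⟩ := upperSemicontinuousOn_iff_preimage_Iio.1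
    (hu.upperSemicontinuousOn.mono hball) (-t)
  have hlevel : ball 0 (1 / 2) ∩ {x | t < |u x|} = ball 0 (1 / 2) ∩ U := by
    rw [← hUu]
    ext x
    refine and_congr_right fun hx => ?_
    rw [Set.mem_ofPred_eq, abs_of_nonpos (hu₀ x (hball hx)), Set.mem_preimage, Set.mem_Iio,
      lt_neg]
  have hopen : IsOpen ((ball (0 : E) (1 / 2) ∩ U) \ {0}) :=
    (isOpen_ball.inter hU).sdiff isClosed_singleton
  rw [hlevel, ← measure_sdiff_null (measure_singleton (0 : E)),
    hopen.measure_eq_iSup_isCompact]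
  refine iSup₂_le fun K hK => iSup_le fun hK_compact => ?_
  rw [← ofReal_measureReal hK_compact.measure_ne_top]
  refine ENNReal.ofReal_le_ofReal (hcompact u hu hu₀ t ht K (fun y hy => ?_) hK_compact
    (fun h => (hK h).2 rfl) fun y hy => ?_)
  · exact ball_subset_closedBall (hK hy).1.1
  · exact (hUu.symm.subset (hK hy).1).2

end IsSubharmonicOn

end WeakTypeEstimate

section LpEstimate

theorem exists_riesz_exponent {p d : ℝ} (hp : 0 < p) (hd : 0 < d) (hpd : p * (d - 2) < d) :
    ∃ a, 0 < a ∧ d - 2 < a ∧ a < d ∧ p < d / a := by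
  have hlt : max 0 (d - 2) < min d (d / p) := by
    refine max_lt (lt_min hd (by positivity)) (lt_min (by linarith) ?_)
    rwa [lt_div_iff₀' hp]
  obtain ⟨a, ha₁, ha₂⟩ := exists_between hlt
  rw [max_lt_iff] at ha₁
  rw [lt_min_iff] at ha₂
  exact ⟨a, ha₁.1, ha₁.2, ha₂.1, (lt_div_comm₀ hp ha₁.1).2 ha₂.2⟩

theorem integrable_and_integral_rpow_le_of_lintegral_le {α : Type*} [MeasurableSpace α]
    {μ : Measure α} {f : α → ℝ} (hf : AEMeasurable f μ) (hf₀ : 0 ≤ f) {p D A : ℝ} (hp : 0 < p)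
    (hD : 0 ≤ D) (hA : 0 ≤ A)
    (h : ∫⁻ x, ENNReal.ofReal (f x ^ p) ∂μ ≤ ENNReal.ofReal (D * A ^ p)) :
    Integrable (fun x => f x ^ p) μ ∧ (∫ x, f x ^ p ∂μ) ^ (1 / p) ≤ D ^ (1 / p) * A := by
  have hpow₀ : 0 ≤ᵐ[μ] fun x => f x ^ p := ae_of_all _ fun x => Real.rpow_nonneg (hf₀ x) p
  have hmeas : AEStronglyMeasurable (fun x => f x ^ p) μ := (hf.pow_const p).aestronglyMeasurable
  refine ⟨⟨hmeas, ?_⟩, ?_⟩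
  · rw [hasFiniteIntegral_iff_ofReal hpow₀]
    exact h.trans_lt ENNReal.ofReal_lt_top
  calc (∫ x, f x ^ p ∂μ) ^ (1 / p) ≤ (D * A ^ p) ^ (1 / p) := by
        gcongr
        · exact integral_nonneg_of_ae hpow₀
        · rw [integral_eq_lintegral_of_nonneg_ae hpow₀ hmeas]
          exact ENNReal.toReal_le_of_le_ofReal (by positivity) h
    _ = D ^ (1 / p) * A := by
        rw [Real.mul_rpow hD (by positivity), ← Real.rpow_mul hA, mul_one_div_cancel hp.ne',
          Real.rpow_one]

theorem stmt_11_general {E : Type*} [NormedAddCommGroup E] [InnerProductSpace ℝ E]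
    [FiniteDimensional ℝ E] [Nontrivial E] [MeasurableSpace E] [BorelSpace E] {p : ℝ}
    (hp : 0 < p) (hpd : p * ((Module.finrank ℝ E : ℝ) - 2) < Module.finrank ℝ E) :
    ∃ C : ℝ, 0 < C ∧ ∀ u : E → ℝ, IsSubharmonicOn u (closedBall 0 1) →
      (∀ x ∈ closedBall 0 1, u x ≤ 0) →
      IntegrableOn (fun q => |u q| ^ p) (ball 0 (1 / 2)) ∧
        (∫ q in ball 0 (1 / 2), |u q| ^ p) ^ (1 / p) ≤ C * |u 0| := by
  set d := (Module.finrank ℝ E : ℝ)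
  have hd : 0 < d := Nat.cast_pos.2 Module.finrank_pos
  obtain ⟨a, ha, had₁, had₂, hpa⟩ := exists_riesz_exponent hp hd hpd
  obtain ⟨C, hC, hweak⟩ := IsSubharmonicOn.exists_volume_le E ha had₁ had₂
  set D := volume.real (ball (0 : E) (1 / 2)) + p * C / (d / a - p)
  have hD : 0 < D := add_pos_of_pos_of_nonneg (volume_real_ball_pos 0 one_half_pos)
    (div_nonneg (by positivity) (sub_nonneg.2 hpa.le))
  refine ⟨D ^ (1 / p), by positivity, fun u hu hu₀ => ?_⟩
  have hmeas : AEMeasurable (fun q => |u q|) (volume.restrict (ball (0 : E) (1 / 2))) :=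
    (hu.integrableOn_ball (closedBall_subset_closedBall
      one_half_lt_one.le)).aestronglyMeasurable.aemeasurable.abs
  have : IsFiniteMeasure (volume.restrict (ball (0 : E) (1 / 2))) :=
    isFiniteMeasure_restrict.2 measure_ball_lt_top.ne
  refine integrable_and_integral_rpow_le_of_lintegral_le hmeas (fun q => abs_nonneg _) hp hD.le
    (abs_nonneg _) ?_
  have hweak' : ∀ t > 0, volume.restrict (ball 0 (1 / 2)) {x | t < |u x|} ≤
      ENNReal.ofReal (C * (|u 0| / t) ^ (d / a)) := fun t ht => by
    rw [Measure.restrict_apply' measurableSet_ball, Set.inter_comm]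
    exact hweak u hu hu₀ t ht
  simpa only [measureReal_restrict_apply_univ] using lintegral_rpow_le_of_weak_type hmeas
    (ae_of_all _ fun q => abs_nonneg _) hp hpa hC (abs_nonneg _) hweak'

theorem SubharmonicOn.isSubharmonicOn {u : E4 → ℝ} {s t : Set E4} (hu : SubharmonicOn u s)
    (hts : t ⊆ s) : IsSubharmonicOn u t where
  upperSemicontinuousOn := hu.1.mono hts
  locallyIntegrableOn := hu.2.1.mono_set hts
  le_setAverage x r hr hxr := by
    rw [setAverage_eq, smul_eq_mul, measureReal_def]
    exact hu.2.2 x (hts (hxr (mem_closedBall_self hr.le))) r hr (hxr.trans hts)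

end LpEstimate

theorem stmt_11 (p : ℝ) (hp1 : 1 ≤ p) (hp2 : p < 2) :
    ∃ C : ℝ, 0 < C ∧ ∀ (s : Set E4) (u : E4 → ℝ),
      IsOpen s → closedBall (0 : E4) 1 ⊆ s →
      SubharmonicOn u s → (∀ x ∈ s, u x ≤ 0) →
      IntegrableOn (fun q => |u q| ^ p) (ball (0 : E4) (1 / 2)) volume ∧
        (∫ q in ball (0 : E4) (1 / 2), |u q| ^ p) ^ (1 / p) ≤ C * |u 0| := by
  obtain ⟨C, hC, hbound⟩ := stmt_11_general (E := E4) (p := p) (by linarith)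
    (by rw [finrank_euclideanSpace_fin]; push_cast; linarith)
  exact ⟨C, hC, fun s u _ hs hu hu₀ =>
    hbound u (hu.isSubharmonicOn hs) fun x hx => hu₀ x (hs hx)⟩

end
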